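/- Let $d \in \mathbb{N}$, let $K \subseteq \mathbb{R}^d$ be a compact set, let $k \in \mathbb{N}$, $l \in \mathbb{N}$, let $K_1, K_2 \subseteq \mathbb{R}^d$ be compact sets and $V \subseteq \mathbb{R}^d$ a compact set containing $K \cup K_1 \cup K_2$, and suppose $\mathrm{vol}(K) > 0$. Let $\varepsilon \in (0,1)$ and let $H : \mathbb{R}^d \times \mathbb{R}^d \to \mathbb{C}$ be a smooth function with $\mathrm{supp}\, H \subseteq K \times K$ satisfying $p_{V \times V,\, l}(H) \le \ln(\varepsilon^{-k})$. Then, with $L_1 = H$, $L_{n+1}(x,y) = \int_K H(x,\xi) L_n(\xi,y)\, \mathrm{d}\xi$ and $S = \sum_{n=1}^{\infty} \frac{L_n}{n!}$, one has $p_{K_1 \times K_2,\, l}(S) \le \frac{1}{\mathrm{vol}(K)} \varepsilon^{-k\, \mathrm{vol}(K)}$. -/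

import Mathlib

open MeasureTheory Set Filter

noncomputable def dirDeriv {E : Type*} [NormedAddCommGroup E] [NormedSpace ℝ E]
    (v : E) (f : E → ℂ) : E → ℂ := fun x => fderiv ℝ f x v

noncomputable def itDeriv {E : Type*} [NormedAddCommGroup E] [NormedSpace ℝ E] :
    List E → (E → ℂ) → E → ℂ
  | [] => fun f => f
  | v :: vs => fun f => itDeriv vs (dirDeriv v f)

/-- The standard basis directions of the product space `ℝ^m × ℝ^n`. -/
def prodDirs (m n : ℕ) : Set ((Fin m → ℝ) × (Fin n → ℝ)) :=
  {v | (∃ i, v = (Pi.single i (1:ℝ), 0)) ∨ ∃ j, v = (0, Pi.single j (1:ℝ))}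

/-- The standard basis directions of `ℝ^d`. -/
def stdDirs (d : ℕ) : Set (Fin d → ℝ) := {v | ∃ i, v = Pi.single i (1:ℝ)}

/-- The seminorm `p_{A,l}(f)`: the sup over `x ∈ A` and over all partial derivatives
(iterated directional derivatives along basis directions from `B`) of order `≤ l`. -/
noncomputable def pSemi {E : Type*} [NormedAddCommGroup E] [NormedSpace ℝ E]
    (B A : Set E) (l : ℕ) (f : E → ℂ) : ℝ :=
  sSup {r | ∃ vs : List E, vs.length ≤ l ∧ (∀ v ∈ vs, v ∈ B) ∧ ∃ x ∈ A, r = ‖itDeriv vs f x‖}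

/-- The iterated kernels: `iterKer S H n` is the kernel `L_{n+1}` of the paper,
i.e. `L_1 = H` and `L_{n+1}(x,y) = ∫_S H(x,ξ) L_n(ξ,y) dξ` for `n ≥ 1`. -/
noncomputable def iterKer {d : ℕ} (S : Set (Fin d → ℝ))
    (H : (Fin d → ℝ) × (Fin d → ℝ) → ℂ) : ℕ → (Fin d → ℝ) × (Fin d → ℝ) → ℂ
  | 0 => H
  | n + 1 => fun q => ∫ ξ in S, H (q.1, ξ) * iterKer S H n (ξ, q.2)

/-!
A direction of `ℝ^d × ℝ^d` along one of the two factors differentiates only one of the kernels in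
`∫_S F(x, ξ) G(ξ, y) dξ`. Hence the seminorm `p` of this composition is at most
`p(F) p(G) vol(S)`, and `p(L_n) ≤ p(H)^n vol(S)^(n-1)`. Summing against `1/n!` gives
`vol(S)⁻¹ (exp(p(H) vol(S)) - 1)`, and `exp(ln(ε^(-k)) vol(S)) = ε^(-k vol(S))`. The series may be
differentiated termwise because the same bound, for derivatives of every order and on arbitrarily
large balls, majorizes the differentiated series.
-/

open Metric
open scoped ContDiff Topology

section DirectionalDerivatives

variable {E : Type*} [NormedAddCommGroup E] [NormedSpace ℝ E] {f g : E → ℂ}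

theorem contDiff_dirDeriv {m n : WithTop ℕ∞} (hf : ContDiff ℝ n f) (hmn : m + 1 ≤ n) (v : E) :
    ContDiff ℝ m (dirDeriv v f) :=
  (hf.fderiv_right hmn).clm_apply contDiff_const

theorem dirDeriv_zero_left (f : E → ℂ) : dirDeriv 0 f = 0 :=
  funext fun x => map_zero (fderiv ℝ f x)

theorem dirDeriv_const_mul (c : ℂ) (hf : Differentiable ℝ f) (v : E) :
    dirDeriv v (fun x => c * f x) = fun x => c * dirDeriv v f x := by
  funext x
  simp [dirDeriv, fderiv_const_mul (hf x)]

theorem eqOn_dirDeriv {U : Set E} (hU : IsOpen U) (h : EqOn f g U) (v : E) :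
    EqOn (dirDeriv v f) (dirDeriv v g) U := fun x hx => by
  simp only [dirDeriv, (h.eventuallyEq_of_mem (hU.mem_nhds hx)).fderiv_eq]

theorem itDeriv_concat (vs : List E) (v : E) (f : E → ℂ) :
    itDeriv (vs ++ [v]) f = dirDeriv v (itDeriv vs f) := by
  induction vs generalizing f with
  | nil => rfl
  | cons w _ ih => exact ih (dirDeriv w f)

theorem itDeriv_const_mul (c : ℂ) (vs : List E) (hf : ContDiff ℝ vs.length f) :
    itDeriv vs (fun x => c * f x) = fun x => c * itDeriv vs f x := by
  induction vs generalizing f with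
  | nil => rfl
  | cons v vs ih =>
    simp only [itDeriv]
    rw [dirDeriv_const_mul c (hf.differentiable (by simp)) v, ih (contDiff_dirDeriv hf (by simp) v)]

theorem eqOn_itDeriv {U : Set E} (hU : IsOpen U) (h : EqOn f g U) (vs : List E) :
    EqOn (itDeriv vs f) (itDeriv vs g) U := by
  induction vs generalizing f g with
  | nil => exact h
  | cons v _ ih => exact ih (eqOn_dirDeriv hU h v)

theorem norm_itDeriv_le_pow_mul_norm_iteratedFDeriv {r : ℝ} {vs : List E}
    (hvs : ∀ v ∈ vs, ‖v‖ ≤ r) (hf : ContDiff ℝ vs.length f) (x : E) :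
    ‖itDeriv vs f x‖ ≤ r ^ vs.length * ‖iteratedFDeriv ℝ vs.length f x‖ := by
  induction vs generalizing f with
  | nil => simp [itDeriv]
  | cons v vs ih =>
    obtain ⟨hv, hvs⟩ := List.forall_mem_cons.1 hvs
    have hr : 0 ≤ r := (norm_nonneg v).trans hv
    have hdv : ‖iteratedFDeriv ℝ vs.length (dirDeriv v f) x‖ ≤
        ‖v‖ * ‖iteratedFDeriv ℝ (vs.length + 1) f x‖ := by
      rw [← norm_iteratedFDeriv_fderiv]
      exact norm_iteratedFDeriv_clm_apply_const
        (hf.fderiv_right (m := vs.length) (by simp)).contDiffAt le_rfl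
    calc ‖itDeriv vs (dirDeriv v f) x‖
        ≤ r ^ vs.length * ‖iteratedFDeriv ℝ vs.length (dirDeriv v f) x‖ :=
          ih hvs (contDiff_dirDeriv hf (by simp) v)
      _ ≤ r ^ vs.length * (r * ‖iteratedFDeriv ℝ (vs.length + 1) f x‖) := by
          gcongr
          exact hdv.trans (by gcongr)
      _ = r ^ (vs.length + 1) * ‖iteratedFDeriv ℝ (vs.length + 1) f x‖ := by ring

theorem exists_forall_norm_itDeriv_le {A B : Set E} (hA : IsCompact A) (hB : Bornology.IsBounded B)
    {l : ℕ} (hf : ContDiff ℝ l f) :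
    ∃ C : ℝ, ∀ vs : List E, vs.length ≤ l → (∀ v ∈ vs, v ∈ B) → ∀ x ∈ A, ‖itDeriv vs f x‖ ≤ C := by
  obtain ⟨r, hr⟩ := hB.exists_norm_le
  have hbdd (j : Fin (l + 1)) : ∃ C, ∀ x ∈ A, ‖iteratedFDeriv ℝ j f x‖ ≤ C :=
    hA.exists_bound_of_continuousOn
      (hf.continuous_iteratedFDeriv (mod_cast j.is_le)).continuousOn
  choose C hC using hbdd
  refine ⟨∑ j : Fin (l + 1), |r ^ (j : ℕ) * C j|, fun vs hvl hvB x hx => ?_⟩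
  let j : Fin (l + 1) := ⟨vs.length, Nat.lt_succ_of_le hvl⟩
  have hr0 : 0 ≤ r ^ vs.length := by
    cases vs with
    | nil => simp
    | cons v vs => exact pow_nonneg ((norm_nonneg v).trans (hr v (hvB v (by simp)))) _
  calc ‖itDeriv vs f x‖
      ≤ r ^ vs.length * ‖iteratedFDeriv ℝ vs.length f x‖ :=
        norm_itDeriv_le_pow_mul_norm_iteratedFDeriv (fun v hv => hr v (hvB v hv))
          (hf.of_le (mod_cast hvl)) x
    _ ≤ r ^ vs.length * C j := mul_le_mul_of_nonneg_left (hC j x hx) hr0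
    _ ≤ |r ^ (j : ℕ) * C j| := le_abs_self _
    _ ≤ ∑ j : Fin (l + 1), |r ^ (j : ℕ) * C j| :=
        Finset.single_le_sum (f := fun j : Fin (l + 1) => |r ^ (j : ℕ) * C j|)
          (fun _ _ => abs_nonneg _) (Finset.mem_univ j)

theorem norm_itDeriv_le_pSemi {A B : Set E} (hA : IsCompact A) (hB : Bornology.IsBounded B)
    {l : ℕ} (hf : ContDiff ℝ l f) {vs : List E} (hvl : vs.length ≤ l) (hvB : ∀ v ∈ vs, v ∈ B)
    {x : E} (hx : x ∈ A) : ‖itDeriv vs f x‖ ≤ pSemi B A l f := by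
  obtain ⟨C, hC⟩ := exists_forall_norm_itDeriv_le hA hB hf
  refine le_csSup ⟨C, ?_⟩ ⟨vs, hvl, hvB, x, hx, rfl⟩
  rintro _ ⟨ws, hwl, hwB, y, hy, rfl⟩
  exact hC ws hwl hwB y hy

theorem pSemi_nonneg (B A : Set E) (l : ℕ) (f : E → ℂ) : 0 ≤ pSemi B A l f := by
  refine Real.sSup_nonneg ?_
  rintro _ ⟨vs, -, -, x, -, rfl⟩
  exact norm_nonneg _

theorem pSemi_le {A B : Set E} {l : ℕ} {C : ℝ} (hC : 0 ≤ C)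
    (h : ∀ vs : List E, vs.length ≤ l → (∀ v ∈ vs, v ∈ B) → ∀ x ∈ A, ‖itDeriv vs f x‖ ≤ C) :
    pSemi B A l f ≤ C := by
  refine Real.sSup_le ?_ hC
  rintro _ ⟨vs, hvl, hvB, x, hx, rfl⟩
  exact h vs hvl hvB x hx

theorem pSemi_const_mul_le {A B : Set E} (hA : IsCompact A) (hB : Bornology.IsBounded B) {l : ℕ}
    (hf : ContDiff ℝ l f) (c : ℂ) : pSemi B A l (fun x => c * f x) ≤ ‖c‖ * pSemi B A l f := by
  refine pSemi_le (mul_nonneg (norm_nonneg c) (pSemi_nonneg ..)) fun vs hvl hvB x hx => ?_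
  rw [itDeriv_const_mul c vs (hf.of_le (mod_cast hvl)), norm_mul]
  gcongr
  exact norm_itDeriv_le_pSemi hA hB hf hvl hvB hx

theorem eqOn_dirDeriv_tsum {U : Set E} (hU : IsOpen U) (hUc : IsPreconnected U) {ι : Type*}
    {F : ι → E → ℂ} (hF : ∀ i, Differentiable ℝ (F i)) {u : ι → ℝ} (hu : Summable u)
    (hFu : ∀ i, ∀ x ∈ U, ‖fderiv ℝ (F i) x‖ ≤ u i) (hsum : ∀ x ∈ U, Summable fun i => F i x)
    (v : E) : EqOn (dirDeriv v fun x => ∑' i, F i x) (fun x => ∑' i, dirDeriv v (F i) x) U := by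
  intro x hx
  have hderiv := hasFDerivAt_tsum_of_isPreconnected hu hU hUc
    (fun i y _ => (hF i y).hasFDerivAt) hFu hx (hsum x hx) hx
  simp only [dirDeriv, hderiv.fderiv]
  exact (ContinuousLinearMap.apply ℝ ℂ v).map_tsum (.of_norm_bounded hu fun i => hFu i x hx)

theorem eqOn_itDeriv_tsum {B U : Set E} (hU : IsOpen U) (hUc : IsPreconnected U) {ι : Type*}
    {F : ι → E → ℂ} (hF : ∀ i, ContDiff ℝ ∞ (F i)) (hsum : ∀ x ∈ U, Summable fun i => F i x)
    (hmaj : ∀ ws : List E, (∀ w ∈ ws, w ∈ B) →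
      ∃ u : ι → ℝ, Summable u ∧ ∀ i, ∀ x ∈ U, ‖fderiv ℝ (itDeriv ws (F i)) x‖ ≤ u i)
    {vs : List E} (hvs : ∀ v ∈ vs, v ∈ B) :
    EqOn (itDeriv vs fun x => ∑' i, F i x) (fun x => ∑' i, itDeriv vs (F i) x) U := by
  induction vs generalizing F with
  | nil => exact fun _ _ => rfl
  | cons v vs ih =>
    obtain ⟨hv, hvs⟩ := List.forall_mem_cons.1 hvs
    obtain ⟨u, hu, hFu⟩ := hmaj [] (by simp)
    have hsum' (x) (hx : x ∈ U) : Summable fun i => dirDeriv v (F i) x :=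
      .of_norm_bounded (hu.mul_right ‖v‖) fun i =>
        (fderiv ℝ (F i) x).le_of_opNorm_le (hFu i x hx) v
    have hdv := eqOn_dirDeriv_tsum hU hUc (fun i => (hF i).differentiable (by simp)) hu hFu hsum v
    exact (eqOn_itDeriv hU hdv vs).trans <|
      ih (fun i => contDiff_dirDeriv (hF i) (by simp) v) hsum'
        (fun ws hws => hmaj (v :: ws) (List.forall_mem_cons.2 ⟨hv, hws⟩)) hvs

end DirectionalDerivatives

section AxisDirections

variable {X Y : Type*} [NormedAddCommGroup X] [NormedAddCommGroup Y]

/-- The directions in `X × Y` along one of the two factors, with the nonzero component taken from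
`A` or `B`. This extends `prodDirs` from the standard bases to arbitrary sets of directions, such
as unit balls, so that derivatives along product directions control the full derivative. -/
def axisDirs (A : Set X) (B : Set Y) : Set (X × Y) :=
  {v | (∃ a ∈ A, v = (a, 0)) ∨ ∃ b ∈ B, v = (0, b)}

theorem axisDirs_mono {A A' : Set X} {B B' : Set Y} (hA : A ⊆ A') (hB : B ⊆ B') :
    axisDirs A B ⊆ axisDirs A' B' := by
  rintro _ (⟨a, ha, rfl⟩ | ⟨b, hb, rfl⟩)
  exacts [.inl ⟨a, hA ha, rfl⟩, .inr ⟨b, hB hb, rfl⟩]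

theorem isBounded_axisDirs {A : Set X} {B : Set Y} (hA : Bornology.IsBounded A)
    (hB : Bornology.IsBounded B) : Bornology.IsBounded (axisDirs A B) := by
  refine ((hA.prod (Bornology.isBounded_singleton (x := 0))).union
    ((Bornology.isBounded_singleton (x := 0)).prod hB)).subset ?_
  rintro _ (⟨a, ha, rfl⟩ | ⟨b, hb, rfl⟩)
  exacts [.inl ⟨ha, rfl⟩, .inr ⟨rfl, hb⟩]

theorem opNorm_le_of_forall_axisDirs [NormedSpace ℝ X] [NormedSpace ℝ Y] {G : Type*}
    [NormedAddCommGroup G] [NormedSpace ℝ G] {T : X × Y →L[ℝ] G} {C : ℝ}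
    (hT : ∀ v ∈ axisDirs (closedBall (0 : X) 1) (closedBall (0 : Y) 1), ‖T v‖ ≤ C) :
    ‖T‖ ≤ 2 * C := by
  have hC : 0 ≤ C := (norm_nonneg _).trans (hT 0 (.inl ⟨0, by simp, rfl⟩))
  have hinl : ‖T.comp (.inl ℝ X Y)‖ ≤ C :=
    ContinuousLinearMap.opNorm_le_of_unit_norm hC fun a ha =>
      hT _ (.inl ⟨a, by simp [ha], rfl⟩)
  have hinr : ‖T.comp (.inr ℝ X Y)‖ ≤ C :=
    ContinuousLinearMap.opNorm_le_of_unit_norm hC fun b hb =>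
      hT _ (.inr ⟨b, by simp [hb], rfl⟩)
  refine T.opNorm_le_bound (by positivity) fun w => ?_
  calc ‖T w‖ = ‖T.comp (.inl ℝ X Y) w.1 + T.comp (.inr ℝ X Y) w.2‖ := by simp [← map_add]
    _ ≤ C * ‖w.1‖ + C * ‖w.2‖ :=
        norm_add_le_of_le (ContinuousLinearMap.le_of_opNorm_le _ hinl _)
          (ContinuousLinearMap.le_of_opNorm_le _ hinr _)
    _ ≤ C * ‖w‖ + C * ‖w‖ := by
        gcongr
        exacts [norm_fst_le w, norm_snd_le w]
    _ = 2 * C * ‖w‖ := by ring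

theorem norm_fderiv_itDeriv_le_two_mul_pSemi [NormedSpace ℝ X] [NormedSpace ℝ Y] {A : Set X}
    {B : Set Y} (hA : Bornology.IsBounded A) (hA1 : closedBall 0 1 ⊆ A)
    (hB : Bornology.IsBounded B) (hB1 : closedBall 0 1 ⊆ B) {W : Set (X × Y)} (hW : IsCompact W)
    {f : X × Y → ℂ} {vs : List (X × Y)} (hf : ContDiff ℝ (vs.length + 1 : ℕ) f)
    (hvs : ∀ v ∈ vs, v ∈ axisDirs A B) {q : X × Y} (hq : q ∈ W) :
    ‖fderiv ℝ (itDeriv vs f) q‖ ≤ 2 * pSemi (axisDirs A B) W (vs.length + 1) f := by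
  refine opNorm_le_of_forall_axisDirs fun v hv => ?_
  change ‖dirDeriv v (itDeriv vs f) q‖ ≤ _
  rw [← itDeriv_concat]
  refine norm_itDeriv_le_pSemi hW (isBounded_axisDirs hA hB) hf (by simp) (fun w hw => ?_) hq
  rcases List.mem_append.1 hw with hw | hw
  exacts [hvs w hw, List.mem_singleton.1 hw ▸ axisDirs_mono hA1 hB1 hv]

theorem prodDirs_eq_axisDirs (m n : ℕ) : prodDirs m n = axisDirs (stdDirs m) (stdDirs n) := by
  ext v
  simp [prodDirs, axisDirs, stdDirs]

theorem isBounded_stdDirs (d : ℕ) : Bornology.IsBounded (stdDirs d) := by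
  refine (finite_range fun i : Fin d => (Pi.single i 1 : Fin d → ℝ)).isBounded.subset ?_
  rintro _ ⟨i, rfl⟩
  exact mem_range_self i

end AxisDirections

section ParametricIntegrals

variable {E Z : Type*} [NormedAddCommGroup E] [NormedSpace ℝ E] [NormedAddCommGroup Z]
  [NormedSpace ℝ Z] {F : Type*} [NormedAddCommGroup F] [NormedSpace ℝ F]

theorem continuous_fderiv_comp_inl {Φ : E × Z → F} (hΦ : ContDiff ℝ 1 Φ) :
    Continuous fun p => (fderiv ℝ Φ p).comp (.inl ℝ E Z) :=
  (hΦ.continuous_fderiv one_ne_zero).clm_comp continuous_const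

variable [MeasurableSpace Z] [OpensMeasurableSpace Z] {μ : Measure Z}
  [IsFiniteMeasureOnCompacts μ] {S : Set Z}

theorem integrableOn_fderiv_comp_inl (hS : IsCompact S) {Φ : E × Z → F} (hΦ : ContDiff ℝ 1 Φ)
    (q : E) : IntegrableOn (fun ξ => (fderiv ℝ Φ (q, ξ)).comp (.inl ℝ E Z)) S μ :=
  ((continuous_fderiv_comp_inl hΦ).comp
    (Continuous.prodMk_right q)).continuousOn.integrableOn_compact hS

theorem hasFDerivAt_setIntegral_of_contDiff (hS : IsCompact S) {Φ : E × Z → F}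
    (hΦ : ContDiff ℝ 1 Φ) (q : E) :
    HasFDerivAt (fun q => ∫ ξ in S, Φ (q, ξ) ∂μ)
      (∫ ξ in S, (fderiv ℝ Φ (q, ξ)).comp (.inl ℝ E Z) ∂μ) q := by
  have hint (q : E) : IntegrableOn (fun ξ => Φ (q, ξ)) S μ :=
    (hΦ.continuous.comp (Continuous.prodMk_right q)).continuousOn.integrableOn_compact hS
  have hcont := continuous_fderiv_comp_inl hΦ
  have hint' := integrableOn_fderiv_comp_inl (μ := μ) hS hΦ q
  obtain ⟨C, hC⟩ := hS.exists_bound_of_continuousOn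
    (hcont.comp (Continuous.prodMk_right q)).continuousOn
  have hbound : ∀ᶠ x in 𝓝 q, ∀ ξ ∈ S, ‖(fderiv ℝ Φ (x, ξ)).comp (.inl ℝ E Z)‖ < C + 1 :=
    hS.eventually_forall_of_forall_eventually fun ξ hξ =>
      (hcont.norm.tendsto (q, ξ)).eventually_lt_const ((hC ξ hξ).trans_lt (lt_add_one C))
  refine hasFDerivAt_integral_of_dominated_of_fderiv_le (bound := fun _ => C + 1)
    (F' := fun q ξ => (fderiv ℝ Φ (q, ξ)).comp (.inl ℝ E Z)) hbound
    (.of_forall fun q => (hint q).aestronglyMeasurable) (hint q) hint'.aestronglyMeasurable ?_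
    (integrableOn_const hS.measure_ne_top) (.of_forall fun ξ x _ => ?_)
  · filter_upwards [ae_restrict_mem hS.measurableSet] with ξ hξ x hx using (hx ξ hξ).le
  · exact (hΦ.differentiable one_ne_zero (x, ξ)).hasFDerivAt.comp x (hasFDerivAt_prodMk_left x ξ)

theorem dirDeriv_setIntegral (hS : IsCompact S) {Φ : E × Z → ℂ} (hΦ : ContDiff ℝ 1 Φ) (w : E) :
    dirDeriv w (fun q => ∫ ξ in S, Φ (q, ξ) ∂μ) =
      fun q => ∫ ξ in S, dirDeriv (w, 0) Φ (q, ξ) ∂μ := by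
  funext q
  rw [dirDeriv, (hasFDerivAt_setIntegral_of_contDiff hS hΦ q).fderiv,
    ContinuousLinearMap.integral_apply (integrableOn_fderiv_comp_inl hS hΦ q)]
  rfl

end ParametricIntegrals

section KernelComposition

variable {X Y Z : Type*}

theorem dirDeriv_kernel_mul [NormedAddCommGroup X] [NormedSpace ℝ X] [NormedAddCommGroup Y]
    [NormedSpace ℝ Y] [NormedAddCommGroup Z] [NormedSpace ℝ Z] {F : X × Z → ℂ} {G : Z × Y → ℂ}
    (hF : Differentiable ℝ F) (hG : Differentiable ℝ G) (w q : X × Y) (ξ : Z) :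
    dirDeriv (w, 0) (fun p : (X × Y) × Z => F (p.1.1, p.2) * G (p.2, p.1.2)) (q, ξ) =
      dirDeriv (w.1, 0) F (q.1, ξ) * G (ξ, q.2) + F (q.1, ξ) * dirDeriv (0, w.2) G (ξ, q.2) := by
  have hfst := hasFDerivAt_fst (𝕜 := ℝ) (p := (q, ξ))
  have hsnd := hasFDerivAt_snd (𝕜 := ℝ) (p := (q, ξ))
  have hFd := (hF (q.1, ξ)).hasFDerivAt.comp (q, ξ) (hfst.fst.prodMk hsnd)
  have hGd := (hG (ξ, q.2)).hasFDerivAt.comp (q, ξ) (hsnd.prodMk hfst.snd)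
  have hFG := (hFd.mul hGd).fderiv
  simp only [Function.comp_def, Pi.mul_def] at hFG
  simp only [dirDeriv, hFG, add_apply, smul_apply, ContinuousLinearMap.comp_apply,
    ContinuousLinearMap.prod_apply, ContinuousLinearMap.coe_snd', ContinuousLinearMap.coe_fst',
    smul_eq_mul]
  ring

variable [MeasurableSpace Z]

/-- The composition `(x, y) ↦ ∫_S F(x, ξ) G(ξ, y) dμ(ξ)` of integral kernels. With `F = H`
and `G = iterKer S H n` it is `iterKer S H (n + 1)`. -/
noncomputable def kerComp (μ : Measure Z) (S : Set Z) (F : X × Z → ℂ) (G : Z × Y → ℂ) :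
    X × Y → ℂ :=
  fun q => ∫ ξ in S, F (q.1, ξ) * G (ξ, q.2) ∂μ

variable {μ : Measure Z} {S : Set Z} {F : X × Z → ℂ} {G : Z × Y → ℂ}

theorem kerComp_zero_left : kerComp μ S (0 : X × Z → ℂ) G = 0 := by
  funext q
  simp [kerComp]

theorem kerComp_zero_right : kerComp μ S F (0 : Z × Y → ℂ) = 0 := by
  funext q
  simp [kerComp]

theorem norm_kerComp_le (hS : μ S < ⊤) {q : X × Y} {a b : ℝ} (hF : ∀ ξ ∈ S, ‖F (q.1, ξ)‖ ≤ a)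
    (hG : ∀ ξ ∈ S, ‖G (ξ, q.2)‖ ≤ b) : ‖kerComp μ S F G q‖ ≤ a * b * μ.real S :=
  norm_setIntegral_le_of_norm_le_const hS fun ξ hξ =>
    (norm_mul_le _ _).trans <|
      mul_le_mul (hF ξ hξ) (hG ξ hξ) (norm_nonneg _) ((norm_nonneg _).trans (hF ξ hξ))

variable [NormedAddCommGroup X] [NormedSpace ℝ X] [NormedAddCommGroup Y] [NormedSpace ℝ Y]
  [NormedAddCommGroup Z] [NormedSpace ℝ Z] [OpensMeasurableSpace Z] [IsFiniteMeasureOnCompacts μ]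

theorem differentiable_kerComp (hS : IsCompact S) (hF : ContDiff ℝ 1 F) (hG : ContDiff ℝ 1 G) :
    Differentiable ℝ (kerComp μ S F G : X × Y → ℂ) := fun q =>
  (hasFDerivAt_setIntegral_of_contDiff
    (Φ := fun p : (X × Y) × Z => F (p.1.1, p.2) * G (p.2, p.1.2))
    hS (by fun_prop) q).differentiableAt

theorem dirDeriv_kerComp (hS : IsCompact S) (hF : ContDiff ℝ 1 F) (hG : ContDiff ℝ 1 G)
    (w : X × Y) :
    dirDeriv w (kerComp μ S F G) =
      kerComp μ S (dirDeriv (w.1, 0) F) G + kerComp μ S F (dirDeriv (0, w.2) G) := by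
  have hint {F : X × Z → ℂ} {G : Z × Y → ℂ} (hF : Continuous F) (hG : Continuous G) (q : X × Y) :
      IntegrableOn (fun ξ => F (q.1, ξ) * G (ξ, q.2)) S μ :=
    (Continuous.continuousOn (by fun_prop)).integrableOn_compact hS
  funext q
  calc dirDeriv w (kerComp μ S F G) q
      = ∫ ξ in S, dirDeriv (w, 0)
          (fun p : (X × Y) × Z => F (p.1.1, p.2) * G (p.2, p.1.2)) (q, ξ) ∂μ :=
        congrFun (dirDeriv_setIntegral
          (Φ := fun p : (X × Y) × Z => F (p.1.1, p.2) * G (p.2, p.1.2)) hS (by fun_prop) w) q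
    _ = ∫ ξ in S, (dirDeriv (w.1, 0) F (q.1, ξ) * G (ξ, q.2) +
          F (q.1, ξ) * dirDeriv (0, w.2) G (ξ, q.2)) ∂μ := by
        simp only [dirDeriv_kernel_mul (hF.differentiable one_ne_zero)
          (hG.differentiable one_ne_zero)]
    _ = _ := integral_add
        (hint (contDiff_dirDeriv (m := 0) hF (by simp) _).continuous hG.continuous q)
        (hint hF.continuous (contDiff_dirDeriv (m := 0) hG (by simp) _).continuous q)

theorem contDiff_kerComp [FiniteDimensional ℝ X] [FiniteDimensional ℝ Y] (hS : IsCompact S)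
    (hF : ContDiff ℝ ∞ F) (hG : ContDiff ℝ ∞ G) :
    ContDiff ℝ ∞ (kerComp μ S F G : X × Y → ℂ) := by
  refine contDiff_infty.2 fun n => ?_
  induction n generalizing F G with
  | zero =>
    exact contDiff_zero.2
      (differentiable_kerComp hS (hF.of_le (by simp)) (hG.of_le (by simp))).continuous
  | succ n ih =>
    refine contDiff_succ_iff_fderiv_apply.2
      ⟨differentiable_kerComp hS (hF.of_le (by simp)) (hG.of_le (by simp)),
        fun h => absurd h (WithTop.natCast_ne_top n), fun w => ?_⟩
    change ContDiff ℝ n (dirDeriv w (kerComp μ S F G))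
    rw [dirDeriv_kerComp hS (hF.of_le (by simp)) (hG.of_le (by simp))]
    exact (ih (contDiff_dirDeriv hF (by simp) _) hG).add (ih hF (contDiff_dirDeriv hG (by simp) _))

theorem exists_itDeriv_kerComp_eq (hS : IsCompact S) (hF : ContDiff ℝ ∞ F) (hG : ContDiff ℝ ∞ G)
    {A : Set X} {B : Set Y} (C : Set Z) {vs : List (X × Y)} (hvs : ∀ v ∈ vs, v ∈ axisDirs A B) :
    ∃ (as : List (X × Z)) (bs : List (Z × Y)), as.length ≤ vs.length ∧ bs.length ≤ vs.length ∧
      (∀ v ∈ as, v ∈ axisDirs A C) ∧ (∀ v ∈ bs, v ∈ axisDirs C B) ∧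
      itDeriv vs (kerComp μ S F G) = kerComp μ S (itDeriv as F) (itDeriv bs G) := by
  induction vs generalizing F G with
  | nil => exact ⟨[], [], by simp [itDeriv]⟩
  | cons v vs ih =>
    obtain ⟨hv, hvs'⟩ := List.forall_mem_cons.1 hvs
    have hd := dirDeriv_kerComp (μ := μ) hS (hF.of_le (by simp)) (hG.of_le (by simp)) v
    rcases hv with ⟨a, ha, rfl⟩ | ⟨b, hb, rfl⟩
    · obtain ⟨as, bs, hal, hbl, has, hbs, h⟩ :=
        ih (contDiff_dirDeriv hF (by simp) (a, 0)) hG hvs'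
      refine ⟨(a, 0) :: as, bs, by simpa, hbl.trans (by simp),
        List.forall_mem_cons.2 ⟨.inl ⟨a, ha, rfl⟩, has⟩, hbs, ?_⟩
      simpa [itDeriv, hd, dirDeriv_zero_left, kerComp_zero_right, ← Prod.zero_eq_mk] using h
    · obtain ⟨as, bs, hal, hbl, has, hbs, h⟩ :=
        ih hF (contDiff_dirDeriv hG (by simp) (0, b)) hvs'
      refine ⟨as, (0, b) :: bs, hal.trans (by simp), by simpa, has,
        List.forall_mem_cons.2 ⟨.inr ⟨b, hb, rfl⟩, hbs⟩, ?_⟩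
      simpa [itDeriv, hd, dirDeriv_zero_left, kerComp_zero_left, ← Prod.zero_eq_mk] using h

theorem pSemi_kerComp_le (hS : IsCompact S) (hF : ContDiff ℝ ∞ F) (hG : ContDiff ℝ ∞ G)
    {A : Set X} {B : Set Y} {C : Set Z} (hA : Bornology.IsBounded A) (hB : Bornology.IsBounded B)
    (hC : Bornology.IsBounded C) {P : Set X} {Q : Set Y} {R : Set Z} (hP : IsCompact P)
    (hQ : IsCompact Q) (hR : IsCompact R) (hSR : S ⊆ R) (l : ℕ) :
    pSemi (axisDirs A B) (P ×ˢ Q) l (kerComp μ S F G) ≤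
      pSemi (axisDirs A C) (P ×ˢ R) l F * pSemi (axisDirs C B) (R ×ˢ Q) l G * μ.real S := by
  refine pSemi_le (mul_nonneg (mul_nonneg (pSemi_nonneg ..) (pSemi_nonneg ..))
    measureReal_nonneg) fun vs hvl hvs q hq => ?_
  obtain ⟨as, bs, hal, hbl, has, hbs, h⟩ := exists_itDeriv_kerComp_eq (μ := μ) hS hF hG C hvs
  rw [h]
  exact norm_kerComp_le hS.measure_lt_top
    (fun ξ hξ => norm_itDeriv_le_pSemi (hP.prod hR) (isBounded_axisDirs hA hC)
      (hF.of_le (mod_cast le_top)) (hal.trans hvl) has ⟨hq.1, hSR hξ⟩)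
    (fun ξ hξ => norm_itDeriv_le_pSemi (hR.prod hQ) (isBounded_axisDirs hC hB)
      (hG.of_le (mod_cast le_top)) (hbl.trans hvl) hbs ⟨hSR hξ, hq.2⟩)

end KernelComposition

section ExponentialSeries

theorem summable_inv_factorial_succ_mul (M v : ℝ) :
    Summable fun n : ℕ => ((n + 1).factorial : ℝ)⁻¹ * (M ^ (n + 1) * v ^ n) := by
  refine .of_norm_bounded ((Real.summable_pow_div_factorial |M * v|).mul_left |M|) fun n => ?_
  have hfac : (n.factorial : ℝ) ≤ (n + 1).factorial := mod_cast Nat.factorial_le n.le_succ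
  calc ‖((n + 1).factorial : ℝ)⁻¹ * (M ^ (n + 1) * v ^ n)‖
      = |M| * (|M * v| ^ n / (n + 1).factorial) := by
        simp only [norm_mul, norm_inv, norm_pow, Real.norm_eq_abs, Nat.abs_cast, abs_mul]
        ring
    _ ≤ |M| * (|M * v| ^ n / n.factorial) := by gcongr

theorem hasSum_inv_factorial_succ_mul (M : ℝ) {v : ℝ} (hv : v ≠ 0) :
    HasSum (fun n : ℕ => ((n + 1).factorial : ℝ)⁻¹ * (M ^ (n + 1) * v ^ n))
      (v⁻¹ * (Real.exp (M * v) - 1)) := by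
  have hexp : HasSum (fun n : ℕ => (M * v) ^ n / n.factorial) (Real.exp (M * v)) := by
    rw [Real.exp_eq_exp_ℝ]
    exact NormedSpace.expSeries_div_hasSum_exp (M * v)
  have htail : HasSum (fun n : ℕ => (M * v) ^ (n + 1) / (n + 1).factorial)
      (Real.exp (M * v) - 1) := by
    simpa using (hasSum_nat_add_iff' 1).2 hexp
  refine (htail.mul_left v⁻¹).congr_fun fun n => ?_
  field_simp
  ring

end ExponentialSeries

section ExponentialKernel

variable {d : ℕ} {S : Set (Fin d → ℝ)} {H : (Fin d → ℝ) × (Fin d → ℝ) → ℂ}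

/-- The term `L_{n+1} / (n+1)!` of the exponential series of the kernel `H`. -/
noncomputable def expKerTerm (S : Set (Fin d → ℝ)) (H : (Fin d → ℝ) × (Fin d → ℝ) → ℂ) (n : ℕ) :
    (Fin d → ℝ) × (Fin d → ℝ) → ℂ :=
  fun q => ((n + 1).factorial : ℂ)⁻¹ * iterKer S H n q

/-- The kernel `∑_{n ≥ 1} L_n / n!` of the operator `exp(T) - 1`, where `T` is the integral
operator on `S` with kernel `H`. -/
noncomputable def expKer (S : Set (Fin d → ℝ)) (H : (Fin d → ℝ) × (Fin d → ℝ) → ℂ) :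
    (Fin d → ℝ) × (Fin d → ℝ) → ℂ :=
  fun q => ∑' n, expKerTerm S H n q

theorem contDiff_iterKer (hS : IsCompact S) (hH : ContDiff ℝ ∞ H) (n : ℕ) :
    ContDiff ℝ ∞ (iterKer S H n) := by
  induction n with
  | zero => exact hH
  | succ n ih => exact contDiff_kerComp hS hH ih

theorem contDiff_expKerTerm (hS : IsCompact S) (hH : ContDiff ℝ ∞ H) (n : ℕ) :
    ContDiff ℝ ∞ (expKerTerm S H n) :=
  contDiff_const.mul (contDiff_iterKer hS hH n)

variable {A W : Set (Fin d → ℝ)}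

theorem pSemi_iterKer_le (hS : IsCompact S) (hH : ContDiff ℝ ∞ H) (hA : Bornology.IsBounded A)
    (hW : IsCompact W) (hSW : S ⊆ W) (l n : ℕ) :
    pSemi (axisDirs A A) (W ×ˢ W) l (iterKer S H n) ≤
      pSemi (axisDirs A A) (W ×ˢ W) l H ^ (n + 1) * volume.real S ^ n := by
  set M := pSemi (axisDirs A A) (W ×ˢ W) l H
  have hM : 0 ≤ M := pSemi_nonneg ..
  induction n with
  | zero => simp [M, iterKer]
  | succ n ih =>
    calc pSemi (axisDirs A A) (W ×ˢ W) l (kerComp volume S H (iterKer S H n))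
        ≤ M * pSemi (axisDirs A A) (W ×ˢ W) l (iterKer S H n) * volume.real S :=
          pSemi_kerComp_le hS hH (contDiff_iterKer hS hH n) hA hA hA hW hW hW hSW l
      _ ≤ M * (M ^ (n + 1) * volume.real S ^ n) * volume.real S := by gcongr
      _ = M ^ (n + 1 + 1) * volume.real S ^ (n + 1) := by ring

theorem pSemi_expKerTerm_le (hS : IsCompact S) (hH : ContDiff ℝ ∞ H) (hA : Bornology.IsBounded A)
    (hW : IsCompact W) (hSW : S ⊆ W) (l n : ℕ) :
    pSemi (axisDirs A A) (W ×ˢ W) l (expKerTerm S H n) ≤ ((n + 1).factorial : ℝ)⁻¹ *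
      (pSemi (axisDirs A A) (W ×ˢ W) l H ^ (n + 1) * volume.real S ^ n) := by
  calc pSemi (axisDirs A A) (W ×ˢ W) l (expKerTerm S H n)
      ≤ ‖((n + 1).factorial : ℂ)⁻¹‖ * pSemi (axisDirs A A) (W ×ˢ W) l (iterKer S H n) :=
        pSemi_const_mul_le (hW.prod hW) (isBounded_axisDirs hA hA)
          ((contDiff_iterKer hS hH n).of_le (mod_cast le_top)) _
    _ ≤ _ := by
        rw [norm_inv, Complex.norm_natCast]
        gcongr
        exact pSemi_iterKer_le hS hH hA hW hSW l n

theorem summable_pSemi_expKerTerm (hS : IsCompact S) (hH : ContDiff ℝ ∞ H)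
    (hA : Bornology.IsBounded A) (hW : IsCompact W) (hSW : S ⊆ W) (l : ℕ) :
    Summable fun n => pSemi (axisDirs A A) (W ×ˢ W) l (expKerTerm S H n) :=
  .of_nonneg_of_le (fun _ => pSemi_nonneg ..) (pSemi_expKerTerm_le hS hH hA hW hSW l)
    (summable_inv_factorial_succ_mul _ _)

theorem itDeriv_expKer (hS : IsCompact S) (hH : ContDiff ℝ ∞ H) (hA : Bornology.IsBounded A)
    {vs : List ((Fin d → ℝ) × (Fin d → ℝ))} (hvs : ∀ v ∈ vs, v ∈ axisDirs A A)
    (q : (Fin d → ℝ) × (Fin d → ℝ)) :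
    itDeriv vs (expKer S H) q = ∑' n, itDeriv vs (expKerTerm S H n) q := by
  obtain ⟨r, hSr⟩ := hS.isBounded.subset_closedBall 0
  let R := max r (‖q‖ + 1)
  let W : Set (Fin d → ℝ) := closedBall 0 R
  -- With the unit vectors among the directions, the seminorms dominate full derivatives.
  let A' : Set (Fin d → ℝ) := A ∪ closedBall 0 1
  have hW : IsCompact W := isCompact_closedBall 0 R
  have hSW : S ⊆ W := hSr.trans (closedBall_subset_closedBall (le_max_left ..))
  have hA' : Bornology.IsBounded A' := hA.union isBounded_closedBall
  have hUW : ball 0 R ⊆ W ×ˢ W := by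
    rw [closedBall_prod_same]
    exact ball_subset_closedBall
  have hterm (l n : ℕ) : ContDiff ℝ l (expKerTerm S H n) :=
    (contDiff_expKerTerm hS hH n).of_le (mod_cast le_top)
  refine eqOn_itDeriv_tsum (B := axisDirs A' A') (U := ball 0 R) isOpen_ball
    (convex_ball 0 R).isPreconnected (contDiff_expKerTerm hS hH) (fun x hx => ?_)
    (fun ws hws => ?_) (fun v hv => axisDirs_mono subset_union_left subset_union_left (hvs v hv))
    (mem_ball_zero_iff.2 ((lt_add_one _).trans_le (le_max_right ..)))
  · exact .of_norm_bounded (summable_pSemi_expKerTerm hS hH hA' hW hSW 0) fun n =>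
      norm_itDeriv_le_pSemi (hW.prod hW) (isBounded_axisDirs hA' hA') (hterm 0 n)
        (vs := []) (by simp) (by simp) (hUW hx)
  · exact ⟨_, (summable_pSemi_expKerTerm hS hH hA' hW hSW (ws.length + 1)).mul_left 2,
      fun n x hx => norm_fderiv_itDeriv_le_two_mul_pSemi hA' subset_union_right hA'
        subset_union_right (hW.prod hW) (hterm _ n) hws (hUW hx)⟩

theorem pSemi_expKer_le (hS : IsCompact S) (hvol : volume.real S ≠ 0) (hH : ContDiff ℝ ∞ H)
    (hA : Bornology.IsBounded A) (hW : IsCompact W) (hSW : S ⊆ W)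
    {K : Set ((Fin d → ℝ) × (Fin d → ℝ))} (hK : K ⊆ W ×ˢ W) (l : ℕ) :
    pSemi (axisDirs A A) K l (expKer S H) ≤ (volume.real S)⁻¹ *
      (Real.exp (pSemi (axisDirs A A) (W ×ˢ W) l H * volume.real S) - 1) := by
  have hexp := hasSum_inv_factorial_succ_mul (pSemi (axisDirs A A) (W ×ˢ W) l H) hvol
  refine pSemi_le (hexp.nonneg fun n => (pSemi_nonneg ..).trans
    (pSemi_expKerTerm_le hS hH hA hW hSW l n)) fun vs hvl hvs q hq => ?_
  rw [itDeriv_expKer hS hH hA hvs]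
  exact tsum_of_norm_bounded hexp fun n =>
    (norm_itDeriv_le_pSemi (hW.prod hW) (isBounded_axisDirs hA hA)
      ((contDiff_expKerTerm hS hH n).of_le (mod_cast le_top)) hvl hvs (hK hq)).trans
      (pSemi_expKerTerm_le hS hH hA hW hSW l n)

end ExponentialKernel

theorem exponential_kernel_log_estimate_general
    {d : ℕ} (S : Set (Fin d → ℝ)) (hS : IsCompact S) (k : ℝ) (l : ℕ)
    (K₁ K₂ V : Set (Fin d → ℝ)) (hV : IsCompact V) (hKV : S ∪ K₁ ∪ K₂ ⊆ V)
    (hvol : 0 < (volume S).toReal)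
    (ε : ℝ) (hε : 0 < ε)
    (H : (Fin d → ℝ) × (Fin d → ℝ) → ℂ) (hH : ContDiff ℝ ∞ H)
    (hbound : pSemi (prodDirs d d) (V ×ˢ V) l H ≤ Real.log (ε ^ (-k)))
    (Sfun : (Fin d → ℝ) × (Fin d → ℝ) → ℂ)
    (hSfun : ∀ q, Sfun q = ∑' n : ℕ, (((n + 1).factorial : ℂ))⁻¹ * iterKer S H n q) :
    pSemi (prodDirs d d) (K₁ ×ˢ K₂) l Sfun ≤
      ((volume S).toReal)⁻¹ * ε ^ (-(k * (volume S).toReal)) := by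
  obtain ⟨⟨hSV, hK₁V⟩, hK₂V⟩ : (S ⊆ V ∧ K₁ ⊆ V) ∧ K₂ ⊆ V := by
    simpa only [union_subset_iff] using hKV
  obtain rfl : Sfun = expKer S H := funext hSfun
  set v := (volume S).toReal
  calc pSemi (prodDirs d d) (K₁ ×ˢ K₂) l (expKer S H)
      ≤ v⁻¹ * (Real.exp (pSemi (prodDirs d d) (V ×ˢ V) l H * v) - 1) := by
        rw [prodDirs_eq_axisDirs]
        exact pSemi_expKer_le hS hvol.ne' hH (isBounded_stdDirs d) hV hSV
          (prod_mono hK₁V hK₂V) l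
    _ ≤ v⁻¹ * Real.exp (Real.log (ε ^ (-k)) * v) := by
        gcongr
        exact (sub_le_self _ zero_le_one).trans (by gcongr)
    _ = v⁻¹ * ε ^ (-(k * v)) := by
        rw [← Real.rpow_def_of_pos (Real.rpow_pos_of_pos hε _), ← Real.rpow_mul hε.le, neg_mul]

/-- If `p_{V×V,l}(H) ≤ ln(ε^{-k})`, then the exponential kernel satisfies
`p_{K₁×K₂,l}(S) ≤ (1/vol(K)) ε^{-k·vol(K)}`. -/
theorem exponential_kernel_log_estimate
    {d : ℕ} (S : Set (Fin d → ℝ)) (hS : IsCompact S) (k l : ℕ)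
    (K₁ K₂ V : Set (Fin d → ℝ))
    (hK₁ : IsCompact K₁) (hK₂ : IsCompact K₂) (hV : IsCompact V)
    (hKV : S ∪ K₁ ∪ K₂ ⊆ V)
    (hvol : 0 < (volume S).toReal)
    (ε : ℝ) (hε : ε ∈ Ioo (0:ℝ) 1)
    (H : (Fin d → ℝ) × (Fin d → ℝ) → ℂ) (hH : ContDiff ℝ (⊤:ℕ∞) H)
    (hsupp : Function.support H ⊆ S ×ˢ S)
    (hbound : pSemi (prodDirs d d) (V ×ˢ V) l H ≤ Real.log (ε ^ (-(k:ℤ))))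
    (Sfun : (Fin d → ℝ) × (Fin d → ℝ) → ℂ)
    (hSfun : ∀ q, Sfun q = ∑' n : ℕ, (((n+1).factorial : ℂ))⁻¹ * iterKer S H n q) :
    pSemi (prodDirs d d) (K₁ ×ˢ K₂) l Sfun ≤
      ((volume S).toReal)⁻¹ * ε ^ (-((k : ℝ) * (volume S).toReal)) :=
  exponential_kernel_log_estimate_general S hS k l K₁ K₂ V hV hKV hvol ε hε.1 H hH
    (by exact_mod_cast hbound) Sfun hSfun
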